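/- (Lemma 11.) Let (Ω, P) be a probability space, σ : Ω → [0, ∞) a random variable, γ ∈ (0,1], μ₀ > 0 and μ_k = μ₀/k^γ for k ≥ 1. Then for all integers q ≥ p ≥ 1: ∏_{i=p}^{q} E[(1 + μ_i σ)^{−2}] ≤ ( E[(1 + μ₀σ)^{−2}] )^{φ_{1−γ}(q+1) − φ_{1−γ}(p)}. -/

import Mathlib

open MeasureTheory

/-- `φ_α(x) = (x^α - 1)/α` for `α ≠ 0`, `φ₀(x) = log x`. -/
noncomputable def phi (α x : ℝ) : ℝ := if α = 0 then Real.log x else (x ^ α - 1) / α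

/-!
Each factor is bounded separately. Put `X = μ₀ σ` and `E = E[(1 + X)⁻²]`. For `a = k^(-γ) ∈ [0, 1]`,
Bernoulli's inequality `(1 + X)^a ≤ 1 + a X` followed by Jensen's inequality for the concave
function `t ↦ t^a` gives `E[(1 + a X)⁻²] ≤ E^a`. As `φ_{1-γ}` has the decreasing derivative
`x ↦ x^(-γ)`, its increment over `[k, k + 1]` is at most `a`, and `E ≤ 1` allows the exponent `a` to
be replaced by this increment. The increments telescope in the product.
-/

theorem hasDerivAt_phi (α : ℝ) {x : ℝ} (hx : 0 < x) : HasDerivAt (phi α) (x ^ (α - 1)) x := by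
  by_cases hα : α = 0
  · have phi_eq : phi α = Real.log := by funext y; simp [phi, hα]
    rw [phi_eq, hα, zero_sub, Real.rpow_neg_one]
    exact Real.hasDerivAt_log hx.ne'
  · have phi_eq : phi α = fun y ↦ (y ^ α - 1) / α := by funext y; simp [phi, hα]
    simpa [phi_eq, hα] using
      ((Real.hasDerivAt_rpow_const (p := α) (.inl hx.ne')).sub_const 1).div_const α

theorem phi_sub_phi_le {α x y : ℝ} (hα : α ≤ 1) (hx : 0 < x) (hxy : x ≤ y) :
    phi α y - phi α x ≤ x ^ (α - 1) * (y - x) := by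
  have hderiv : ∀ z ∈ Set.Icc x y, HasDerivAt (phi α) (z ^ (α - 1)) z :=
    fun z hz ↦ hasDerivAt_phi α (hx.trans_le hz.1)
  refine (convex_Icc x y).image_sub_le_mul_sub_of_deriv_le
    (fun z hz ↦ (hderiv z hz).continuousAt.continuousWithinAt)
    (fun z hz ↦ (hderiv z (interior_subset hz)).differentiableAt.differentiableWithinAt)
    (fun z hz ↦ ?_) x (Set.left_mem_Icc.2 hxy) y (Set.right_mem_Icc.2 hxy) hxy
  have hz := interior_subset hz
  rw [(hderiv z hz).deriv]
  exact Real.rpow_le_rpow_of_nonpos hx hz.1 (by linarith)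

theorem one_div_one_add_mul_le_rpow {a t : ℝ} (ha₀ : 0 ≤ a) (ha₁ : a ≤ 1) (ht : 0 ≤ t) :
    1 / (1 + a * t) ≤ (1 / (1 + t)) ^ a := by
  rw [Real.div_rpow zero_le_one (by positivity), Real.one_rpow]
  gcongr
  exact rpow_one_add_le_one_add_mul_self (by linarith) ha₀ ha₁

theorem one_div_one_add_rpow_le_one {r t : ℝ} (hr : 0 ≤ r) (ht : 0 ≤ t) :
    (1 / (1 + t)) ^ r ≤ 1 :=
  Real.rpow_le_one (by positivity) (div_le_one_of_le₀ (by linarith) (by positivity)) hr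

section Integral

variable {Ω : Type*} [MeasurableSpace Ω] {P : Measure Ω} {X : Ω → ℝ}

theorem integral_pos_of_ae_pos [NeZero P] (hX : Integrable X P) (hpos : ∀ᵐ ω ∂P, 0 < X ω) :
    0 < ∫ ω, X ω ∂P := by
  have hnonneg : 0 ≤ᵐ[P] X := hpos.mono fun _ hω ↦ hω.le
  refine (integral_nonneg_of_ae hnonneg).lt_of_ne' fun hzero ↦ ?_
  obtain ⟨ω, hω_pos, hω_zero⟩ :=
    (hpos.and ((integral_eq_zero_iff_of_nonneg_ae hnonneg hX).1 hzero)).exists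
  exact hω_pos.ne' hω_zero

theorem integrable_rpow_const [IsFiniteMeasure P] {a : ℝ} (ha₀ : 0 ≤ a) (ha₁ : a ≤ 1)
    (hX : Integrable X P) (hX₀ : 0 ≤ᵐ[P] X) : Integrable (fun ω ↦ X ω ^ a) P := by
  have hbound : Integrable (fun ω ↦ 1 + a * (X ω - 1)) P := by fun_prop
  refine hbound.mono' (hX.aemeasurable.pow_const a).aestronglyMeasurable ?_
  filter_upwards [hX₀] with ω (hω : 0 ≤ X ω)
  rw [Real.norm_of_nonneg (by positivity)]
  simpa using rpow_one_add_le_one_add_mul_self (s := X ω - 1) (by linarith) ha₀ ha₁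

theorem integral_rpow_le_rpow_integral [IsProbabilityMeasure P] {a : ℝ} (ha₀ : 0 ≤ a)
    (ha₁ : a ≤ 1) (hX : Integrable X P) (hX₀ : 0 ≤ᵐ[P] X) :
    ∫ ω, X ω ^ a ∂P ≤ (∫ ω, X ω ∂P) ^ a :=
  (Real.concaveOn_rpow ha₀ ha₁).le_map_integral
    (continuousOn_id.rpow_const fun _ _ ↦ .inr ha₀) isClosed_Ici hX₀ hX
    (integrable_rpow_const ha₀ ha₁ hX hX₀)

theorem integrable_one_div_one_add_rpow [IsFiniteMeasure P] {r : ℝ} (hr : 0 ≤ r)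
    (hX : AEMeasurable X P) (hX₀ : 0 ≤ᵐ[P] X) :
    Integrable (fun ω ↦ (1 / (1 + X ω)) ^ r) P := by
  refine .of_bound (AEMeasurable.aestronglyMeasurable (by fun_prop)) 1 ?_
  filter_upwards [hX₀] with ω (hω : 0 ≤ X ω)
  rw [Real.norm_of_nonneg (by positivity)]
  exact one_div_one_add_rpow_le_one hr hω

variable [IsProbabilityMeasure P] {r : ℝ}

theorem integral_one_div_one_add_rpow_pos (hr : 0 ≤ r) (hX : AEMeasurable X P)
    (hX₀ : 0 ≤ᵐ[P] X) : 0 < ∫ ω, (1 / (1 + X ω)) ^ r ∂P := by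
  refine integral_pos_of_ae_pos (integrable_one_div_one_add_rpow hr hX hX₀) ?_
  filter_upwards [hX₀] with ω (hω : 0 ≤ X ω)
  positivity

theorem integral_one_div_one_add_rpow_le_one (hr : 0 ≤ r) (hX : AEMeasurable X P)
    (hX₀ : 0 ≤ᵐ[P] X) : ∫ ω, (1 / (1 + X ω)) ^ r ∂P ≤ 1 := by
  simpa using integral_mono_ae (integrable_one_div_one_add_rpow hr hX hX₀)
    (integrable_const 1) (hX₀.mono fun _ hω ↦ one_div_one_add_rpow_le_one hr hω)

theorem integral_one_div_one_add_mul_rpow_le {a : ℝ} (ha₀ : 0 ≤ a) (ha₁ : a ≤ 1)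
    (hr : 0 ≤ r) (hX : AEMeasurable X P) (hX₀ : 0 ≤ᵐ[P] X) :
    ∫ ω, (1 / (1 + a * X ω)) ^ r ∂P ≤ (∫ ω, (1 / (1 + X ω)) ^ r ∂P) ^ a := by
  have haX₀ : 0 ≤ᵐ[P] fun ω ↦ a * X ω := hX₀.mono fun _ hω ↦ mul_nonneg ha₀ hω
  have hint := integrable_one_div_one_add_rpow hr hX hX₀
  have hnonneg : 0 ≤ᵐ[P] fun ω ↦ (1 / (1 + X ω)) ^ r := by
    filter_upwards [hX₀] with ω (hω : 0 ≤ X ω)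
    positivity
  have bernoulli : ∀ᵐ ω ∂P, (1 / (1 + a * X ω)) ^ r ≤ ((1 / (1 + X ω)) ^ r) ^ a := by
    filter_upwards [hX₀] with ω (hω : 0 ≤ X ω)
    calc (1 / (1 + a * X ω)) ^ r ≤ ((1 / (1 + X ω)) ^ a) ^ r := by
          gcongr
          exact one_div_one_add_mul_le_rpow ha₀ ha₁ hω
      _ = ((1 / (1 + X ω)) ^ r) ^ a := by
          rw [← Real.rpow_mul (by positivity), ← Real.rpow_mul (by positivity), mul_comm]
  calc ∫ ω, (1 / (1 + a * X ω)) ^ r ∂P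
      ≤ ∫ ω, ((1 / (1 + X ω)) ^ r) ^ a ∂P :=
        integral_mono_ae (integrable_one_div_one_add_rpow hr (hX.const_mul a) haX₀)
          (integrable_rpow_const ha₀ ha₁ hint hnonneg) bernoulli
    _ ≤ (∫ ω, (1 / (1 + X ω)) ^ r ∂P) ^ a := integral_rpow_le_rpow_integral ha₀ ha₁ hint hnonneg

theorem integral_one_div_one_add_div_rpow_le {γ x : ℝ} (hγ : 0 ≤ γ) (hx : 1 ≤ x)
    (hr : 0 ≤ r) (hX : AEMeasurable X P) (hX₀ : 0 ≤ᵐ[P] X) :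
    ∫ ω, (1 / (1 + X ω / x ^ γ)) ^ r ∂P ≤
      (∫ ω, (1 / (1 + X ω)) ^ r ∂P) ^ (phi (1 - γ) (x + 1) - phi (1 - γ) x) := by
  have hx₀ : 0 < x := by linarith
  have hincr : phi (1 - γ) (x + 1) - phi (1 - γ) x ≤ (x ^ γ)⁻¹ := by
    simpa [Real.rpow_neg hx₀.le] using
      phi_sub_phi_le (sub_le_self 1 hγ) hx₀ (le_add_of_nonneg_right zero_le_one)
  calc ∫ ω, (1 / (1 + X ω / x ^ γ)) ^ r ∂P
      = ∫ ω, (1 / (1 + (x ^ γ)⁻¹ * X ω)) ^ r ∂P := by simp only [div_eq_inv_mul]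
    _ ≤ (∫ ω, (1 / (1 + X ω)) ^ r ∂P) ^ (x ^ γ)⁻¹ :=
        integral_one_div_one_add_mul_rpow_le (by positivity)
          (inv_le_one_of_one_le₀ (Real.one_le_rpow hx hγ)) hr hX hX₀
    _ ≤ (∫ ω, (1 / (1 + X ω)) ^ r ∂P) ^ (phi (1 - γ) (x + 1) - phi (1 - γ) x) :=
        Real.rpow_le_rpow_of_exponent_ge (integral_one_div_one_add_rpow_pos hr hX hX₀)
          (integral_one_div_one_add_rpow_le_one hr hX hX₀) hincr

end Integral

theorem stmt_11_general
    {Ω : Type*} [MeasurableSpace Ω] (P : Measure Ω) [IsProbabilityMeasure P]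
    (σ : Ω → ℝ) (hσ : AEMeasurable σ P) (hσ₀ : 0 ≤ᵐ[P] σ)
    (r : ℝ) (hr : 0 ≤ r) (γ : ℝ) (hγ : 0 ≤ γ) (μ₀ : ℝ) (hμ₀ : 0 ≤ μ₀)
    (μ : ℕ → ℝ) (hμ : ∀ k : ℕ, 1 ≤ k → μ k = μ₀ / (k : ℝ) ^ γ)
    (p q : ℕ) (hp : 1 ≤ p) (hpq : p ≤ q) :
    (∏ i ∈ Finset.Icc p q, ∫ S, (1 / (1 + μ i * σ S)) ^ r ∂P) ≤
      (∫ S, (1 / (1 + μ₀ * σ S)) ^ r ∂P) ^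
        (phi (1 - γ) ((q : ℝ) + 1) - phi (1 - γ) (p : ℝ)) := by
  have hX : AEMeasurable (fun S ↦ μ₀ * σ S) P := hσ.const_mul μ₀
  have hX₀ : 0 ≤ᵐ[P] fun S ↦ μ₀ * σ S := hσ₀.mono fun _ hS ↦ mul_nonneg hμ₀ hS
  set E := ∫ S, (1 / (1 + μ₀ * σ S)) ^ r ∂P
  have one_le : ∀ i ∈ Finset.Icc p q, 1 ≤ i := fun i hi ↦ hp.trans (Finset.mem_Icc.1 hi).1
  have hnonneg : ∀ i ∈ Finset.Icc p q, 0 ≤ ∫ S, (1 / (1 + μ i * σ S)) ^ r ∂P := fun i hi ↦ by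
    refine integral_nonneg_of_ae ?_
    filter_upwards [hσ₀] with S (hS : 0 ≤ σ S)
    rw [hμ i (one_le i hi)]
    positivity
  have hfactor : ∀ i ∈ Finset.Icc p q, ∫ S, (1 / (1 + μ i * σ S)) ^ r ∂P ≤
      E ^ (phi (1 - γ) ((i + 1 : ℕ) : ℝ) - phi (1 - γ) (i : ℝ)) := fun i hi ↦ by
    simp only [hμ i (one_le i hi), div_mul_eq_mul_div, Nat.cast_add_one]
    exact integral_one_div_one_add_div_rpow_le hγ (Nat.one_le_cast.2 (one_le i hi)) hr hX hX₀
  calc ∏ i ∈ Finset.Icc p q, ∫ S, (1 / (1 + μ i * σ S)) ^ r ∂P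
      ≤ ∏ i ∈ Finset.Icc p q, E ^ (phi (1 - γ) ((i + 1 : ℕ) : ℝ) - phi (1 - γ) (i : ℝ)) :=
        Finset.prod_le_prod hnonneg hfactor
    _ = E ^ (phi (1 - γ) ((q : ℝ) + 1) - phi (1 - γ) (p : ℝ)) := by
        rw [← Real.rpow_sum_of_pos (integral_one_div_one_add_rpow_pos hr hX hX₀),
          Finset.sum_Icc_sub (f := fun i : ℕ ↦ phi (1 - γ) (i : ℝ)) hpq, Nat.cast_add_one]

/-- Lemma 11: for the stepsizes `μ_k = μ₀/k^γ` with `γ ∈ (0,1]`, and integers `q ≥ p ≥ 1`: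
`∏_{i=p}^{q} E[(1 + μ_i σ)⁻²] ≤ (E[(1 + μ₀ σ)⁻²])^(φ_{1-γ}(q+1) - φ_{1-γ}(p))`. -/
theorem stmt_11
    {Ω : Type*} [MeasurableSpace Ω] (P : Measure Ω) [IsProbabilityMeasure P]
    (σ : Ω → ℝ) (hσmeas : Measurable σ) (hσ0 : ∀ S, 0 ≤ σ S)
    (γ : ℝ) (hγ0 : 0 < γ) (hγ1 : γ ≤ 1)
    (μ₀ : ℝ) (hμ₀ : 0 < μ₀)
    (μ : ℕ → ℝ) (hμ : ∀ k : ℕ, 1 ≤ k → μ k = μ₀ / (k : ℝ) ^ γ)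
    (p q : ℕ) (hp : 1 ≤ p) (hpq : p ≤ q) :
    (∏ i ∈ Finset.Icc p q, ∫ S, (1 / (1 + μ i * σ S)) ^ 2 ∂P) ≤
      (∫ S, (1 / (1 + μ₀ * σ S)) ^ 2 ∂P) ^
        (phi (1 - γ) ((q : ℝ) + 1) - phi (1 - γ) (p : ℝ)) := by
  simpa only [Real.rpow_two] using stmt_11_general P σ hσmeas.aemeasurable (.of_forall hσ0)
    2 zero_le_two γ hγ0.le μ₀ hμ₀.le μ hμ p q hp hpq
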